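/- arXiv:1910.12738 — 12 statements merged into one kernel-verified Lean document; each statement's English description precedes it below -/
import Mathlib

section
/- For every integer n ≥ 4, every orientation of the cycle graph C_n admits a distinguishing vertex-labelling with 2 labels. In particular, the labelling assigning label 1 to two fixed adjacent vertices v_1, v_2 and label 2 to all other vertices is distinguishing for every orientation of C_n. -/
/-- An orientation of a graph with adjacency relation `Adj`: an asymmetric relation whose
symmetric closure is exactly `Adj`. -/
def IsOrientation {V : Type*} (Adj : V → V → Prop) (A : V → V → Prop) : Prop :=
  (∀ u v, A u v → ¬ A v u) ∧ (∀ u v, (A u v ∨ A v u) ↔ Adj u v)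

/-- An automorphism of an oriented graph `A`. -/
def IsAutom {V : Type*} (A : V → V → Prop) (φ : Equiv.Perm V) : Prop :=
  ∀ u v, A u v ↔ A (φ u) (φ v)

/-- A distinguishing vertex-labelling of an oriented graph `A` with `r` labels:
the only automorphism preserving all the vertex labels is the identity. -/
def IsDistVertexLabelling {V : Type*} (A : V → V → Prop) (r : ℕ) (lab : V → Fin r) : Prop :=
  ∀ φ : Equiv.Perm V, IsAutom A φ → (∀ u, lab (φ u) = lab u) → φ = 1

/-- The adjacency relation of the cycle `C_n` on vertices `0, …, n-1` (n ≥ 3). -/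
def cycleAdj (n : ℕ) (u v : Fin n) : Prop :=
  (u.val + 1) % n = v.val ∨ (v.val + 1) % n = u.val

/-- For every integer `n ≥ 4`, every orientation of the cycle `C_n` admits a
distinguishing vertex-labelling with 2 labels; in particular, the labelling that gives
label 1 (here `0 : Fin 2`) to the two fixed adjacent vertices `v_1, v_2` and
label 2 (here `1 : Fin 2`) to all other vertices is distinguishing. -/
theorem cycle_orientation_distinguishing_two_vertex_labelling (n : ℕ) (hn : 4 ≤ n)
    (A : Fin n → Fin n → Prop) (hA : IsOrientation (cycleAdj n) A) :
    IsDistVertexLabelling A 2 (fun u => if u.val ≤ 1 then 0 else 1) ∧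
    ∃ lab : Fin n → Fin 2, IsDistVertexLabelling A 2 lab := by
  have main : IsDistVertexLabelling A 2 (fun u => if u.val ≤ 1 then 0 else 1) := by
    intro φ hφ hl
    obtain ⟨has, hadj⟩ := hA
    have hl' : ∀ u : Fin n, u.val ≤ 1 → (φ u).val ≤ 1 := by
      intro u hu
      have h := hl u
      by_contra hc
      simp [hu, hc] at h
    have hpres : ∀ u v, cycleAdj n u v → cycleAdj n (φ u) (φ v) := by
      intro u v h
      rw [← hadj] at h ⊢
      rwa [← hφ, ← hφ]
    have inj : ∀ u v : Fin n, (φ u).val = (φ v).val → u.val = v.val := by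
      intro u v h
      rw [φ.injective (Fin.ext h)]
    have z : (φ ⟨0, by omega⟩).val = 0 := by
      by_contra hc
      have h0 := hl' ⟨0, by omega⟩ (by simp)
      have h1 := hl' ⟨1, by omega⟩ (by simp)
      have hne : (φ ⟨1, by omega⟩).val ≠ (φ ⟨0, by omega⟩).val := by
        intro h
        have := inj _ _ h
        simp at this
      have e0 : φ ⟨0, by omega⟩ = ⟨1, by omega⟩ := Fin.ext (by simp only; omega)
      have e1 : φ ⟨1, by omega⟩ = ⟨0, by omega⟩ := Fin.ext (by simp only; omega)
      have h01 : cycleAdj n ⟨0, by omega⟩ ⟨1, by omega⟩ := by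
        left
        exact Nat.mod_eq_of_lt (by simp only; omega)
      have hh := hφ ⟨0, by omega⟩ ⟨1, by omega⟩
      rw [e0, e1] at hh
      rcases (hadj _ _).2 h01 with h | h
      · exact has _ _ h (hh.1 h)
      · exact has _ _ h (hh.2 h)
    have o : (φ ⟨1, by omega⟩).val = 1 := by
      have h1 := hl' ⟨1, by omega⟩ (by simp)
      have hne : (φ ⟨1, by omega⟩).val ≠ (φ ⟨0, by omega⟩).val := by
        intro h
        have := inj _ _ h
        simp at this
      omega
    have key : ∀ k : ℕ, ∀ h : k + 1 < n,
        (φ ⟨k, by omega⟩).val = k ∧ (φ ⟨k + 1, h⟩).val = k + 1 := by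
      intro k
      induction k with
      | zero => exact fun h => ⟨z, o⟩
      | succ k ih =>
        intro h
        obtain ⟨a, b⟩ := ih (by omega)
        refine ⟨b, ?_⟩
        have hc : cycleAdj n ⟨k + 1, by omega⟩ ⟨k + 1 + 1, h⟩ :=
          Or.inl (Nat.mod_eq_of_lt h)
        have hc' := hpres _ _ hc
        have hne : (φ ⟨k + 1 + 1, h⟩).val ≠ (φ ⟨k, by omega⟩).val := by
          intro h
          have := inj _ _ h
          simp only at this
          omega
        have hlt := (φ ⟨k + 1 + 1, h⟩).isLt
        rcases hc' with h' | h'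
        · rw [b, Nat.mod_eq_of_lt h] at h'
          exact h'.symm
        · rw [b] at h'
          rcases Nat.lt_or_ge ((φ ⟨k + 1 + 1, h⟩).val + 1) n with hw | hw
          · rw [Nat.mod_eq_of_lt hw] at h'
            omega
          · have : (φ ⟨k + 1 + 1, h⟩).val + 1 = n := by omega
            rw [this, Nat.mod_self] at h'
            omega
    ext ⟨k, hk⟩
    simp only [Equiv.Perm.one_apply]
    rcases k with _ | k
    · exact z
    · exact (key k hk).2
  exact ⟨main, _, main⟩
end

section
/- For every integer n ≥ 4, every orientation of the cycle graph C_n admits a distinguishing arc-labelling with 2 labels. In particular, the arc-labelling assigning label 1 to exactly one arc and label 2 to all other arcs is distinguishing for every orientation of C_n. -/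
/-- A distinguishing arc-labelling of an oriented graph `A` with `r` labels:
the only automorphism preserving all the arc labels is the identity. -/
def IsDistArcLabelling {V : Type*} (A : V → V → Prop) (r : ℕ) (lab : V → V → Fin r) : Prop :=
  ∀ φ : Equiv.Perm V, IsAutom A φ → (∀ u v, A u v → lab (φ u) (φ v) = lab u v) → φ = 1

def cycSucc (n : ℕ) (u : Fin n) : Fin n := ⟨(u.val + 1) % n, Nat.mod_lt _ (u.pos)⟩

theorem cycSucc_val (n : ℕ) (u : Fin n) :
    (cycSucc n u).val = if u.val + 1 = n then 0 else u.val + 1 := by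
  have := u.isLt
  unfold cycSucc
  split_ifs with h
  · simp [h]
  · exact Nat.mod_eq_of_lt (by omega)

theorem cycSucc_inj (n : ℕ) (u v : Fin n) (h : cycSucc n u = cycSucc n v) : u = v := by
  have h2 := congrArg Fin.val h
  rw [cycSucc_val, cycSucc_val] at h2
  have := u.isLt
  have := v.isLt
  apply Fin.ext
  split_ifs at h2 <;> omega

theorem cycSucc_two (n : ℕ) (hn : 4 ≤ n) (u : Fin n) : cycSucc n (cycSucc n u) ≠ u := by
  intro h
  have h2 := congrArg Fin.val h
  rw [cycSucc_val, cycSucc_val] at h2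
  have := u.isLt
  split_ifs at h2 <;> omega

theorem cycSucc_iter (n : ℕ) (x : Fin n) (k : ℕ) :
    ((cycSucc n)^[k] x).val = (x.val + k) % n := by
  induction k with
  | zero => simp [Nat.mod_eq_of_lt x.isLt]
  | succ k ih =>
    rw [Function.iterate_succ_apply']
    change (((cycSucc n)^[k] x).val + 1) % n = _
    rw [ih, Nat.mod_add_mod, Nat.add_assoc]

theorem cycAdj_iff (n : ℕ) (u v : Fin n) :
    cycleAdj n u v ↔ (cycSucc n u = v ∨ cycSucc n v = u) := by
  simp [cycleAdj, cycSucc, Fin.ext_iff]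

theorem cyc_fix (n : ℕ) (hn : 4 ≤ n) (φ : Equiv.Perm (Fin n))
    (hφ : ∀ u v, cycleAdj n u v → cycleAdj n (φ u) (φ v)) (x : Fin n)
    (hx : φ x = x) (hs : φ (cycSucc n x) = cycSucc n x) : φ = 1 := by
  have key : ∀ k, φ ((cycSucc n)^[k] x) = (cycSucc n)^[k] x ∧
      φ ((cycSucc n)^[k+1] x) = (cycSucc n)^[k+1] x := by
    intro k
    induction k with
    | zero => exact ⟨hx, hs⟩
    | succ k ih =>
      refine ⟨ih.2, ?_⟩
      obtain ⟨h1, h2⟩ := ih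
      simp only [Function.iterate_succ_apply'] at h1 h2 ⊢
      generalize (cycSucc n)^[k] x = u at *
      have h3 := hφ _ _ ((cycAdj_iff n (cycSucc n u) (cycSucc n (cycSucc n u))).2 (Or.inl rfl))
      rw [h2, cycAdj_iff] at h3
      rcases h3 with h3 | h3
      · exact h3.symm
      · have h4 := cycSucc_inj _ _ _ h3
        exact absurd (φ.injective (h4.trans h1.symm)) (cycSucc_two n hn u)
  ext y
  have : (cycSucc n)^[n - x.val + y.val] x = y := by
    apply Fin.ext
    rw [cycSucc_iter]
    have := x.isLt
    rw [show x.val + (n - x.val + y.val) = n + y.val by omega]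
    simp [Nat.mod_eq_of_lt y.isLt]
  have h := (key (n - x.val + y.val)).1
  rw [this] at h
  simp [h]

/-- For every integer `n ≥ 4`, every orientation of the cycle `C_n` admits a
distinguishing arc-labelling with 2 labels; in particular, the arc-labelling assigning
label 1 (here `0 : Fin 2`) to exactly one arc `(a, b)` and label 2 (here `1 : Fin 2`) to
all the other arcs is distinguishing. -/
theorem cycle_orientation_distinguishing_two_arc_labelling (n : ℕ) (hn : 4 ≤ n)
    (A : Fin n → Fin n → Prop) (hA : IsOrientation (cycleAdj n) A)
    (a b : Fin n) (hab : A a b) :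
    IsDistArcLabelling A 2 (fun u v => if u = a ∧ v = b then 0 else 1) ∧
    ∃ lab : Fin n → Fin n → Fin 2, IsDistArcLabelling A 2 lab := by
  have main : IsDistArcLabelling A 2 (fun u v => if u = a ∧ v = b then 0 else 1) := by
    intro φ hφ hl
    have h := hl a b hab
    have hfix : φ a = a ∧ φ b = b := by
      by_contra hc
      simp [hc] at h
    have hadj : ∀ u v, cycleAdj n u v → cycleAdj n (φ u) (φ v) := by
      intro u v huv
      rw [← hA.2] at huv ⊢
      rwa [← hφ, ← hφ]
    have hab' := (hA.2 a b).1 (Or.inl hab)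
    rw [cycAdj_iff] at hab'
    rcases hab' with h1 | h1
    · exact cyc_fix n hn φ hadj a hfix.1 (by rw [h1]; exact hfix.2)
    · exact cyc_fix n hn φ hadj b hfix.2 (by rw [h1]; exact hfix.1)
  exact ⟨main, _, main⟩
end

section
/- For every integer n ≥ 2: (i) for every orientation of the star K_{1,n}, every distinguishing vertex-labelling uses at least ⌈n/2⌉ labels (there is no distinguishing vertex-labelling with fewer than ⌈n/2⌉ labels); and (ii) there exists an orientation of K_{1,n} (namely one in which the numbers of in-neighbours and out-neighbours of the central vertex differ by at most one) that admits a distinguishing vertex-labelling with ⌈n/2⌉ labels. -/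
/-- The adjacency relation of the star `K_{1,n}`: the central vertex is `none`,
the leaves are `some y` for `y : Fin n`. -/
def starAdj (n : ℕ) (u v : Option (Fin n)) : Prop :=
  (u = none ∧ v ≠ none) ∨ (v = none ∧ u ≠ none)

def starOr (n : ℕ) : Option (Fin n) → Option (Fin n) → Prop
  | none, some i => i.val % 2 = 0
  | some i, none => i.val % 2 = 1
  | _, _ => False

/-- For every `n ≥ 2`: (i) for every orientation of the star `K_{1,n}`, every
distinguishing vertex-labelling uses at least `⌈n/2⌉` labels; and (ii) there exists an
orientation of `K_{1,n}` — one in which the numbers of in-neighbours and out-neighbours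
of the central vertex differ by at most one — admitting a distinguishing
vertex-labelling with `⌈n/2⌉` labels. -/
theorem star_min_distinguishing_number (n : ℕ) (hn : 2 ≤ n) :
    (∀ A : Option (Fin n) → Option (Fin n) → Prop, IsOrientation (starAdj n) A →
      ∀ r : ℕ, ∀ lab : Option (Fin n) → Fin r,
        IsDistVertexLabelling A r lab → (n + 1) / 2 ≤ r) ∧
    (∃ A : Option (Fin n) → Option (Fin n) → Prop, IsOrientation (starAdj n) A ∧
      ({w | A none w} : Set (Option (Fin n))).ncard ≤
        ({w | A w none} : Set (Option (Fin n))).ncard + 1 ∧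
      ({w | A w none} : Set (Option (Fin n))).ncard ≤
        ({w | A none w} : Set (Option (Fin n))).ncard + 1 ∧
      ∃ lab : Option (Fin n) → Fin ((n + 1) / 2),
        IsDistVertexLabelling A ((n + 1) / 2) lab) := by
  constructor
  · intro A hA r lab hlab
    classical
    have hss : ∀ a b, ¬ A (some a) (some b) := by
      intro a b h
      have := (hA.2 _ _).1 (Or.inl h)
      simp [starAdj] at this
    have hnn : ¬ A none none := fun h => hA.1 _ _ h h
    have hsn : ∀ a, A (some a) none ↔ ¬ A none (some a) := by
      intro a
      have h1 := (hA.2 none (some a)).2 (by simp [starAdj])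
      have h2 := hA.1 none (some a)
      tauto
    have hinj : Function.Injective
        (fun i : Fin n => ((decide (A none (some i)), lab (some i)) : Bool × Fin r)) := by
      intro i j hij
      simp only [Prod.mk.injEq, decide_eq_decide] at hij
      obtain ⟨h1, h2⟩ := hij
      by_contra hne
      have hs : ∀ a, A none (some (Equiv.swap i j a)) ↔ A none (some a) := by
        intro a
        rw [Equiv.swap_apply_def]
        split_ifs with ha hb
        · subst ha; exact h1.symm
        · subst hb; exact h1
        · rfl
      have hl : ∀ a, lab (some (Equiv.swap i j a)) = lab (some a) := by
        intro a
        rw [Equiv.swap_apply_def]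
        split_ifs with ha hb
        · subst ha; exact h2.symm
        · subst hb; exact h2
        · rfl
      have := hlab (Equiv.optionCongr (Equiv.swap i j)) (by
        intro u v
        rcases u with _ | u <;> rcases v with _ | v
        · exact iff_of_false hnn hnn
        · exact (hs v).symm
        · change A (some u) none ↔ A (some (Equiv.swap i j u)) none
          rw [hsn, hsn, hs]
        · exact iff_of_false (hss _ _) (hss _ _)) (by
        intro u
        rcases u with _ | u
        · rfl
        · exact hl u)
      have h3 := congrArg (fun f : Equiv.Perm (Option (Fin n)) => f (some i)) this
      simp at h3
      exact hne h3.symm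
    have := Fintype.card_le_of_injective _ hinj
    simp at this
    omega
  · refine ⟨starOr n, ⟨?_, ?_⟩, ?_, ?_, ?_⟩
    · rintro (_ | u) (_ | v) <;> simp [starOr] <;> omega
    · rintro (_ | u) (_ | v) <;> simp [starOr, starAdj] <;> omega
    · have h1 : (({w | starOr n none w} : Set (Option (Fin n))) \ {some ⟨0, by omega⟩}).ncard ≤
          ({w | starOr n w none} : Set (Option (Fin n))).ncard := by
        apply Set.ncard_le_ncard_of_injOn
          (Option.map (fun i : Fin n => (⟨i.val - 1, by omega⟩ : Fin n)))
        · rintro (_ | u) <;> simp [starOr, Fin.ext_iff]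
          omega
        · rintro (_ | u) hu (_ | v) hv <;> simp [starOr, Fin.ext_iff] at hu hv ⊢
          omega
      have h2 := Set.ncard_sdiff_singleton_add_one
        (s := ({w | starOr n none w} : Set (Option (Fin n)))) (a := some ⟨0, by omega⟩)
        (by simp [starOr])
      omega
    · have h1 : ({w | starOr n w none} : Set (Option (Fin n))).ncard ≤
          ({w | starOr n none w} : Set (Option (Fin n))).ncard := by
        apply Set.ncard_le_ncard_of_injOn
          (Option.map (fun i : Fin n => (⟨i.val - 1, by omega⟩ : Fin n)))
        · rintro (_ | u) <;> simp [starOr]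
          omega
        · rintro (_ | u) hu (_ | v) hv <;> simp [starOr, Fin.ext_iff] at hu hv ⊢
          omega
      omega
    · refine ⟨fun u => match u with
        | none => ⟨0, by omega⟩
        | some i => ⟨i.val / 2, by omega⟩, ?_⟩
      intro φ hφ hl
      have h0 : φ none = none := by
        have a1 := (hφ none (some ⟨0, by omega⟩)).1 (by simp [starOr])
        have a2 := (hφ (some ⟨1, by omega⟩) none).1 (by simp [starOr])
        generalize φ none = x at a1 a2
        generalize φ (some ⟨0, by omega⟩) = y at a1
        generalize φ (some ⟨1, by omega⟩) = z at a2
        rcases x with _ | x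
        · rfl
        · rcases y with _ | y <;> rcases z with _ | z <;> simp [starOr] at a1 a2
          omega
      ext1 u
      rcases u with _ | i
      · simpa using h0
      · have a1 := hφ none (some i)
        have a2 := hl (some i)
        rw [h0] at a1
        have a3 : φ (some i) ≠ none := fun h => by
          have := φ.injective (h.trans h0.symm)
          simp at this
        change φ (some i) = some i
        generalize φ (some i) = x at a1 a2 a3
        rcases x with _ | x
        · exact absurd rfl a3
        · simp [starOr] at a1 a2
          congr 1
          ext
          omega
end

section
/- For every integer n ≥ 3, the balanced complete bipartite graph K_{n,n} admits a rigid orientation. In particular, the orientation in which the out-neighbourhood of x_i is {y_j : j ≤ i} for every i, 1 ≤ i ≤ n, is rigid. -/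
/-- An oriented graph is rigid if its only automorphism is the identity. -/
def IsRigid {V : Type*} (A : V → V → Prop) : Prop :=
  ∀ φ : Equiv.Perm V, IsAutom A φ → φ = 1

/-- The adjacency relation of the complete bipartite graph `K_{m,n}`, with parts
`X = Fin m` (the left summand) and `Y = Fin n` (the right summand). -/
def bipAdj (m n : ℕ) (u v : Sum (Fin m) (Fin n)) : Prop :=
  u.isLeft ≠ v.isLeft

/-- The orientation of `K_{n,n}` in which the out-neighbourhood of `x_i` is
`{y_j : j ≤ i}`. -/
def knnOrient (n : ℕ) : Sum (Fin n) (Fin n) → Sum (Fin n) (Fin n) → Prop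
  | Sum.inl i, Sum.inr j => j ≤ i
  | Sum.inr j, Sum.inl i => i < j
  | _, _ => False

theorem knn_isOrientation (n : ℕ) : IsOrientation (bipAdj n n) (knnOrient n) := by
  constructor
  · rintro (u | u) (v | v) <;> simp [knnOrient]
  · rintro (u | u) (v | v) <;> simp [knnOrient, bipAdj]
    · exact le_or_gt v u
    · exact lt_or_ge v u

theorem knn_isRigid (n : ℕ) : IsRigid (knnOrient n) := by
  intro φ hφ
  have key : ∀ k : ℕ, ∀ h : k < n,
      φ (Sum.inl ⟨k, h⟩) = Sum.inl ⟨k, h⟩ ∧ φ (Sum.inr ⟨k, h⟩) = Sum.inr ⟨k, h⟩ := by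
    intro k
    induction k using Nat.strong_induction_on with
    | _ k ih =>
    intro h
    have hy : φ (Sum.inr ⟨k, h⟩) = Sum.inr ⟨k, h⟩ := by
      -- every out-neighbour of the image is some `x_i` with `i < k`
      have hout : ∀ v, knnOrient n (φ (Sum.inr ⟨k, h⟩)) v →
          ∃ i : Fin n, i.1 < k ∧ v = Sum.inl i := by
        intro v hv
        obtain ⟨u, rfl⟩ := φ.surjective v
        rw [← hφ] at hv
        rcases u with i | i
        · have hi : i.1 < k := hv
          exact ⟨i, hi, (ih i.1 hi i.2).1⟩
        · exact hv.elim
      have hin : ∀ i : Fin n, i.1 < k → knnOrient n (φ (Sum.inr ⟨k, h⟩)) (Sum.inl i) := by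
        intro i hi
        rw [← (ih i.1 hi i.2).1, ← hφ]
        exact hi
      rcases hw : φ (Sum.inr ⟨k, h⟩) with m | m
      · rw [hw] at hout
        obtain ⟨i, -, hi⟩ := hout (Sum.inr m) (le_refl m)
        cases hi
      · rw [hw] at hout hin
        congr 1
        rcases lt_trichotomy m.1 k with hm | hm | hm
        · exact absurd (hin m hm) (lt_irrefl m)
        · exact Fin.ext hm
        · obtain ⟨i, hi, he⟩ := hout (Sum.inl ⟨k, h⟩) hm
          cases he
          exact absurd hi (lt_irrefl k)
    refine ⟨?_, hy⟩
    have hfix : ∀ j : Fin n, j.1 ≤ k → φ (Sum.inr j) = Sum.inr j := by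
      intro j hj
      rcases Nat.lt_or_eq_of_le hj with hj | hj
      · exact (ih j.1 hj j.2).2
      · subst hj
        exact hy
    have hout : ∀ v, knnOrient n (φ (Sum.inl ⟨k, h⟩)) v →
        ∃ j : Fin n, j.1 ≤ k ∧ v = Sum.inr j := by
      intro v hv
      obtain ⟨u, rfl⟩ := φ.surjective v
      rw [← hφ] at hv
      rcases u with j | j
      · exact hv.elim
      · have hj : j.1 ≤ k := hv
        exact ⟨j, hj, hfix j hj⟩
    have hin : knnOrient n (φ (Sum.inl ⟨k, h⟩)) (Sum.inr ⟨k, h⟩) := by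
      rw [← hy, ← hφ]
      exact le_refl k
    rcases hw : φ (Sum.inl ⟨k, h⟩) with m | m
    · rw [hw] at hout hin
      obtain ⟨j, hj, he⟩ := hout (Sum.inr m) (le_refl m)
      cases he
      have hin' : k ≤ m.1 := hin
      congr 1
      exact Fin.ext (le_antisymm hj hin')
    · rw [hw] at hin
      exact hin.elim
  ext u
  rcases u with i | i
  · exact (key i.1 i.2).1
  · exact (key i.1 i.2).2

/-- For every `n ≥ 3`, `K_{n,n}` admits a rigid orientation; in particular the
orientation in which the out-neighbourhood of `x_i` is `{y_j : j ≤ i}` is rigid. -/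
theorem balanced_complete_bipartite_rigid_orientation (n : ℕ) (hn : 3 ≤ n) :
    (IsOrientation (bipAdj n n) (knnOrient n) ∧ IsRigid (knnOrient n)) ∧
    ∃ A : Sum (Fin n) (Fin n) → Sum (Fin n) (Fin n) → Prop,
      IsOrientation (bipAdj n n) A ∧ IsRigid A := by
  exact ⟨⟨knn_isOrientation n, knn_isRigid n⟩, knnOrient n, knn_isOrientation n, knn_isRigid n⟩
end

section
/- For every integer n ≥ 2, every orientation of the balanced complete bipartite graph K_{n,n} admits a distinguishing vertex-labelling with n labels. In particular, the labelling assigning label i to both x_i and y_i, for every i with 1 ≤ i ≤ n, is distinguishing for every orientation of K_{n,n}, since every label is used on exactly two vertices that are joined by an arc. -/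
/-- For every `n ≥ 2`, every orientation of `K_{n,n}` admits a distinguishing
vertex-labelling with `n` labels; in particular the labelling assigning label `i` to
both `x_i` and `y_i` is distinguishing for every orientation of `K_{n,n}`. -/
theorem balanced_complete_bipartite_dist_vertex_labelling (n : ℕ) (hn : 2 ≤ n)
    (A : Sum (Fin n) (Fin n) → Sum (Fin n) (Fin n) → Prop)
    (hA : IsOrientation (bipAdj n n) A) :
    IsDistVertexLabelling A n (Sum.elim id id) ∧
    ∃ lab : Sum (Fin n) (Fin n) → Fin n, IsDistVertexLabelling A n lab := by
  have key : IsDistVertexLabelling A n (Sum.elim id id) := by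
    intro φ hφ hlab
    have hl : ∀ i, φ (Sum.inl i) = Sum.inl i ∨ φ (Sum.inl i) = Sum.inr i := by
      intro i
      have h := hlab (Sum.inl i)
      rcases hx : φ (Sum.inl i) with j | j <;> rw [hx] at h <;> simp at h <;> simp [h]
    have hr : ∀ i, φ (Sum.inr i) = Sum.inl i ∨ φ (Sum.inr i) = Sum.inr i := by
      intro i
      have h := hlab (Sum.inr i)
      rcases hx : φ (Sum.inr i) with j | j <;> rw [hx] at h <;> simp at h <;> simp [h]
    have main : ∀ i, φ (Sum.inl i) = Sum.inl i ∧ φ (Sum.inr i) = Sum.inr i := by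
      intro i
      have hne : φ (Sum.inl i) ≠ φ (Sum.inr i) := fun h => by
        have := φ.injective h
        simp at this
      have hadj : A (Sum.inl i) (Sum.inr i) ∨ A (Sum.inr i) (Sum.inl i) :=
        (hA.2 _ _).2 (by simp [bipAdj])
      have h1 := hA.1 (Sum.inl i) (Sum.inr i)
      have h2 := hφ (Sum.inl i) (Sum.inr i)
      have h3 := hφ (Sum.inr i) (Sum.inl i)
      rcases hl i with a | a <;> rcases hr i with b | b
      · exact absurd (a.trans b.symm) hne
      · exact ⟨a, b⟩
      · rw [a, b] at h2 h3
        tauto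
      · exact absurd (a.trans b.symm) hne
    ext1 u
    rcases u with i | i
    · exact (main i).1
    · exact (main i).2
  exact ⟨key, _, key⟩
end

section
/- For every integer n ≥ 2, every orientation of the balanced complete bipartite graph K_{n,n} admits a distinguishing arc-labelling with 2 labels. In particular, the labelling that assigns label 1 to the arc joining x_i and y_j (in whichever direction it is oriented) if and only if j < i, and label 2 otherwise, is distinguishing for every orientation of K_{n,n}. -/
/-- The arc-labelling of `K_{n,n}` assigning label 1 (here `0 : Fin 2`) to the arc
joining `x_i` and `y_j` (in whichever direction it is oriented) if and only if `j < i`,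
and label 2 (here `1 : Fin 2`) otherwise. -/
def knnArcLab (n : ℕ) : Sum (Fin n) (Fin n) → Sum (Fin n) (Fin n) → Fin 2
  | Sum.inl i, Sum.inr j => if j < i then 0 else 1
  | Sum.inr j, Sum.inl i => if j < i then 0 else 1
  | _, _ => 1

theorem knn_card_lt {n : ℕ} (g : Fin n → Fin n) (hg : Function.Injective g) (a : Fin n) :
    (Finset.univ.filter (fun j => g j < a)).card = (a : ℕ) := by
  have hb : Function.Bijective g := Finite.injective_iff_bijective.mp hg
  have h := Fin.card_Iio a
  rw [← h]
  refine Finset.card_bij (fun j _ => g j) ?_ ?_ ?_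
  · intro j hj
    simpa using hj
  · intro i _ j _ hij
    exact hg hij
  · intro b hbm
    obtain ⟨j, rfl⟩ := hb.2 b
    exact ⟨j, by simpa using hbm, rfl⟩

theorem knn_card_gt {n : ℕ} (g : Fin n → Fin n) (hg : Function.Injective g) (a : Fin n) :
    (Finset.univ.filter (fun j => a < g j)).card = n - 1 - (a : ℕ) := by
  have hb : Function.Bijective g := Finite.injective_iff_bijective.mp hg
  have h := Fin.card_Ioi a
  rw [← h]
  refine Finset.card_bij (fun j _ => g j) ?_ ?_ ?_
  · intro j hj
    simpa using hj
  · intro i _ j _ hij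
    exact hg hij
  · intro b hbm
    obtain ⟨j, rfl⟩ := hb.2 b
    exact ⟨j, by simpa using hbm, rfl⟩

theorem knnArcLab_symm (n : ℕ) (u v : Sum (Fin n) (Fin n)) :
    knnArcLab n u v = knnArcLab n v u := by
  rcases u with i | i <;> rcases v with j | j <;> rfl

theorem knn_main (n : ℕ) (hn : 2 ≤ n)
    (A : Sum (Fin n) (Fin n) → Sum (Fin n) (Fin n) → Prop)
    (hA : IsOrientation (bipAdj n n) A) :
    IsDistArcLabelling A 2 (knnArcLab n) := by
  intro φ hφ hl
  obtain ⟨hasym, hadj⟩ := hA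
  have hadj' : ∀ u v, bipAdj n n u v ↔ bipAdj n n (φ u) (φ v) := by
    intro u v
    rw [← hadj, ← hadj, hφ u v, hφ v u]
  have hlab : ∀ u v, bipAdj n n u v → knnArcLab n (φ u) (φ v) = knnArcLab n u v := by
    intro u v h
    rcases (hadj u v).2 h with h | h
    · exact hl u v h
    · rw [knnArcLab_symm n (φ u), knnArcLab_symm n u]
      exact hl v u h
  simp only [bipAdj] at hadj' hlab
  have z : Fin n := ⟨0, by omega⟩
  by_cases hz : (φ (Sum.inl z)).isLeft = true
  · have hL : ∀ i, ∃ k, φ (Sum.inl i) = Sum.inl k := by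
      intro i
      have := hadj' (Sum.inl z) (Sum.inl i)
      rw [← Sum.isLeft_iff]
      simp [hz] at this
      exact this
    have hR : ∀ i, ∃ k, φ (Sum.inr i) = Sum.inr k := by
      intro i
      have := hadj' (Sum.inl z) (Sum.inr i)
      rw [← Sum.isRight_iff]
      simp [hz] at this
      simp [this]
    choose f hf using hL
    choose g hg using hR
    have fi : Function.Injective f := by
      intro a b h
      have : φ (Sum.inl a) = φ (Sum.inl b) := by rw [hf, hf, h]
      simpa using this
    have gi : Function.Injective g := by
      intro a b h
      have : φ (Sum.inr a) = φ (Sum.inr b) := by rw [hg, hg, h]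
      simpa using this
    have key : ∀ i j, g j < f i ↔ j < i := by
      intro i j
      have := hlab (Sum.inl i) (Sum.inr j) (by simp)
      rw [hf, hg] at this
      simp only [knnArcLab] at this
      by_cases h1 : g j < f i <;> by_cases h2 : j < i <;> simp [h1, h2] <;> simp [h1, h2] at this
    have f1 : ∀ i, f i = i := by
      intro i
      have h1 := knn_card_lt g gi (f i)
      have h2 := knn_card_lt id Function.injective_id i
      simp only [key] at h1
      simp only [id] at h2
      exact Fin.ext (h1.symm.trans h2)
    have g1 : ∀ i, g i = i := by
      intro i
      have h1 := knn_card_gt f fi (g i)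
      have h2 := knn_card_gt id Function.injective_id i
      simp only [key] at h1
      simp only [id] at h2
      apply Fin.ext
      omega
    ext u
    rcases u with i | i
    · simp [hf, f1]
    · simp [hg, g1]
  · exfalso
    have hL : ∀ i, ∃ k, φ (Sum.inl i) = Sum.inr k := by
      intro i
      have := hadj' (Sum.inl z) (Sum.inl i)
      rw [Bool.not_eq_true] at hz
      rw [hz] at this
      rcases h : φ (Sum.inl i) with k | k
      · simp [h] at this
      · exact ⟨k, rfl⟩
    have hR : ∀ i, ∃ k, φ (Sum.inr i) = Sum.inl k := by
      intro i
      have := hadj' (Sum.inl z) (Sum.inr i)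
      rw [Bool.not_eq_true] at hz
      rw [hz] at this
      rcases h : φ (Sum.inr i) with k | k
      · exact ⟨k, rfl⟩
      · simp [h] at this
    choose f hf using hL
    choose g hg using hR
    have fi : Function.Injective f := by
      intro a b h
      have : φ (Sum.inl a) = φ (Sum.inl b) := by rw [hf, hf, h]
      simpa using this
    have gi : Function.Injective g := by
      intro a b h
      have : φ (Sum.inr a) = φ (Sum.inr b) := by rw [hg, hg, h]
      simpa using this
    have key : ∀ i j, f i < g j ↔ j < i := by
      intro i j
      have := hlab (Sum.inl i) (Sum.inr j) (by simp)
      rw [hf, hg] at this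
      simp only [knnArcLab] at this
      by_cases h1 : f i < g j <;> by_cases h2 : j < i <;> simp [h1, h2] <;> simp [h1, h2] at this
    have f1 : ∀ i, n - 1 - (f i : ℕ) = i := by
      intro i
      have h1 := knn_card_gt g gi (f i)
      have h2 := knn_card_lt id Function.injective_id i
      simp only [key] at h1
      simp only [id] at h2
      exact h1.symm.trans h2
    have g1 : ∀ i, (g i : ℕ) = n - 1 - i := by
      intro i
      have h1 := knn_card_lt f fi (g i)
      have h2 := knn_card_gt id Function.injective_id i
      simp only [key] at h1
      simp only [id] at h2
      exact h1.symm.trans h2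
    have gf : g (f z) = z := Fin.ext ((g1 _).trans (f1 _))
    have hx := hφ (Sum.inl z) (Sum.inr (f z))
    rw [hf, hg, gf] at hx
    have had : bipAdj n n (Sum.inl z) (Sum.inr (f z)) := by simp [bipAdj]
    rcases (hadj _ _).2 had with h | h
    · exact hasym _ _ h (hx.1 h)
    · exact hasym _ _ h (hx.2 h)

/-- For every `n ≥ 2`, every orientation of `K_{n,n}` admits a distinguishing
arc-labelling with 2 labels; in particular the labelling `knnArcLab n` is
distinguishing for every orientation of `K_{n,n}`. -/
theorem balanced_complete_bipartite_dist_arc_labelling (n : ℕ) (hn : 2 ≤ n)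
    (A : Sum (Fin n) (Fin n) → Sum (Fin n) (Fin n) → Prop)
    (hA : IsOrientation (bipAdj n n) A) :
    IsDistArcLabelling A 2 (knnArcLab n) ∧
    ∃ lab : Sum (Fin n) (Fin n) → Sum (Fin n) (Fin n) → Fin 2,
      IsDistArcLabelling A 2 lab := by
  exact ⟨knn_main n hn A hA, _, knn_main n hn A hA⟩
end

section
/- Let m, n be integers with 2 ≤ m < n, and suppose that the complete bipartite graph K_{m,n} admits no rigid orientation. Then there exists an orientation of K_{m,n} that admits a distinguishing vertex-labelling with ⌈n/(m−1)⌉ labels, and there exists an orientation of K_{m,n} that admits a distinguishing proper vertex-colouring with 1 + ⌈n/(m−1)⌉ colours. -/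
def stairA (m n : ℕ) : Sum (Fin m) (Fin n) → Sum (Fin m) (Fin n) → Prop
  | Sum.inl i, Sum.inr j => i.val ≤ j.val % (m - 1)
  | Sum.inr j, Sum.inl i => ¬ (i.val ≤ j.val % (m - 1))
  | _, _ => False

lemma stairA_orient (m n : ℕ) : IsOrientation (bipAdj m n) (stairA m n) := by
  constructor
  · rintro (i | i) (j | j) <;> simp [stairA]
  · rintro (i | i) (j | j) <;> simp [stairA, bipAdj]
    · exact le_or_gt _ _
    · exact lt_or_ge _ _

lemma stairA_parts (m n : ℕ) (hm : 2 ≤ m) (hmn : m < n)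
    (φ : Equiv.Perm (Sum (Fin m) (Fin n))) (h : IsAutom (stairA m n) φ) (u) :
    (φ u).isLeft = u.isLeft := by
  have hadj : ∀ u v, bipAdj m n u v ↔ bipAdj m n (φ u) (φ v) := by
    intro u v
    rw [← (stairA_orient m n).2, ← (stairA_orient m n).2, ← h u v, ← h v u]
  have hy : ∃ j : Fin n, (φ (Sum.inr j)).isLeft = false := by
    by_contra hc
    have hc' : ∀ j : Fin n, ∃ i : Fin m, φ (Sum.inr j) = Sum.inl i := by
      intro j
      rcases hj : φ (Sum.inr j) with i | i
      · exact ⟨i, rfl⟩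
      · exact absurd ⟨j, by rw [hj]; rfl⟩ hc
    choose f hf using hc'
    have hinj : Function.Injective f := by
      intro a b hab
      have : φ (Sum.inr a) = φ (Sum.inr b) := by rw [hf, hf, hab]
      exact Sum.inr_injective (φ.injective this)
    have := Fintype.card_le_of_injective f hinj
    simp at this
    omega
  obtain ⟨j, hj⟩ := hy
  have := hadj u (Sum.inr j)
  unfold bipAdj at this
  rw [hj] at this
  simp at this
  exact this.symm

lemma stairA_fix (m n : ℕ) (hm : 2 ≤ m) (hmn : m < n)
    (φ : Equiv.Perm (Sum (Fin m) (Fin n))) (h : IsAutom (stairA m n) φ) :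
    (∀ i, φ (Sum.inl i) = Sum.inl i) ∧
    ∀ j, ∃ j' : Fin n, φ (Sum.inr j) = Sum.inr j' ∧ j'.val % (m - 1) = j.val % (m - 1) := by
  have hp := stairA_parts m n hm hmn φ h
  have hl : ∀ i : Fin m, ∃ i' : Fin m, φ (Sum.inl i) = Sum.inl i' := by
    intro i
    have := hp (Sum.inl i)
    rcases hj : φ (Sum.inl i) with k | k
    · exact ⟨k, rfl⟩
    · simp [hj] at this
  have hr : ∀ i : Fin n, ∃ i' : Fin n, φ (Sum.inr i) = Sum.inr i' := by
    intro i
    have := hp (Sum.inr i)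
    rcases hj : φ (Sum.inr i) with k | k
    · simp [hj] at this
    · exact ⟨k, rfl⟩
  choose σ hσ using hl
  choose τ hτ using hr
  have key : ∀ i j, i.val ≤ j.val % (m - 1) ↔ (σ i).val ≤ (τ j).val % (m - 1) := by
    intro i j
    have := h (Sum.inl i) (Sum.inr j)
    rw [hσ, hτ] at this
    exact this
  have hmono : StrictMono σ := by
    intro a b hab
    have hab' : a.val < b.val := hab
    have hb := b.isLt
    have hmod : a.val % (m - 1) = a.val := Nat.mod_eq_of_lt (by omega)
    have h1 := key a ⟨a.val, by omega⟩
    have h2 := key b ⟨a.val, by omega⟩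
    simp only [hmod] at h1 h2
    have h3 := h1.1 le_rfl
    have h4 : ¬ _ := fun q => absurd (h2.2 q) (by omega)
    show (σ a).val < (σ b).val
    omega
  have hid : σ = id := by
    apply (StrictMono.range_inj hmono strictMono_id).1
    rw [(Finite.surjective_of_injective hmono.injective).range_eq]
    simp
  subst hid
  refine ⟨hσ, fun j => ⟨τ j, hτ j, ?_⟩⟩
  have l1 : j.val % (m - 1) < m - 1 := Nat.mod_lt _ (by omega)
  have l2 : (τ j).val % (m - 1) < m - 1 := Nat.mod_lt _ (by omega)
  have h1 := (key ⟨j.val % (m - 1), by omega⟩ j).1 le_rfl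
  have h2 := (key ⟨(τ j).val % (m - 1), by omega⟩ j).2 le_rfl
  simp only [id] at h1 h2
  omega

lemma stairA_dist (m n r : ℕ) (hm : 2 ≤ m) (hmn : m < n) (lab : Sum (Fin m) (Fin n) → Fin r)
    (hlab : ∀ j j' : Fin n, lab (Sum.inr j) = lab (Sum.inr j') →
      j.val / (m - 1) = j'.val / (m - 1)) :
    IsDistVertexLabelling (stairA m n) r lab := by
  intro φ h hl
  obtain ⟨h1, h2⟩ := stairA_fix m n hm hmn φ h
  ext1 u
  rcases u with i | j
  · simpa using h1 i
  · obtain ⟨j', e, hmod⟩ := h2 j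
    have hd := hl (Sum.inr j)
    rw [e] at hd
    have hd' := hlab _ _ hd
    have : j' = j := by
      ext
      rw [← Nat.div_add_mod j'.val (m - 1), ← Nat.div_add_mod j.val (m - 1), hd', hmod]
    simpa [this] using e

lemma label_lt (m n j : ℕ) (hm : 2 ≤ m) (hj : j < n) :
    j / (m - 1) < (n + m - 2) / (m - 1) := by
  rw [Nat.lt_iff_add_one_le, ← Nat.add_div_right _ (by omega)]
  exact Nat.div_le_div_right (by omega)

/-- Let `2 ≤ m < n`, and suppose `K_{m,n}` admits no rigid orientation. Then some
orientation of `K_{m,n}` admits a distinguishing vertex-labelling with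
`⌈n/(m-1)⌉ = (n + m - 2)/(m - 1)` labels, and some orientation of `K_{m,n}` admits a
distinguishing proper vertex-colouring with `1 + ⌈n/(m-1)⌉` colours. -/
theorem unbalanced_complete_bipartite_no_rigid_upper_bounds (m n : ℕ)
    (hm : 2 ≤ m) (hmn : m < n)
    (hnorigid : ∀ A : Sum (Fin m) (Fin n) → Sum (Fin m) (Fin n) → Prop,
      IsOrientation (bipAdj m n) A → ¬ IsRigid A) :
    (∃ A : Sum (Fin m) (Fin n) → Sum (Fin m) (Fin n) → Prop,
      IsOrientation (bipAdj m n) A ∧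
      ∃ lab : Sum (Fin m) (Fin n) → Fin ((n + m - 2) / (m - 1)),
        IsDistVertexLabelling A ((n + m - 2) / (m - 1)) lab) ∧
    (∃ A : Sum (Fin m) (Fin n) → Sum (Fin m) (Fin n) → Prop,
      IsOrientation (bipAdj m n) A ∧
      ∃ lab : Sum (Fin m) (Fin n) → Fin (1 + (n + m - 2) / (m - 1)),
        IsDistVertexLabelling A (1 + (n + m - 2) / (m - 1)) lab ∧
        ∀ u v, bipAdj m n u v → lab u ≠ lab v) := by
  refine ⟨⟨stairA m n, stairA_orient m n, Sum.elim (fun _ => ⟨0 / (m - 1), label_lt m n 0 hm (by omega)⟩)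
      (fun j => ⟨j.val / (m - 1), label_lt m n j.val hm j.isLt⟩), ?_⟩,
    ⟨stairA m n, stairA_orient m n, Sum.elim (fun _ => ⟨0, by rw [Nat.add_comm]; exact Nat.succ_pos _⟩)
      (fun j => ⟨1 + j.val / (m - 1), Nat.add_lt_add_left (label_lt m n j.val hm j.isLt) 1⟩),
      ?_, ?_⟩⟩
  · apply stairA_dist m n _ hm hmn
    intro j j' h
    simpa using h
  · apply stairA_dist m n _ hm hmn
    intro j j' h
    simpa using h
  · rintro (i | i) (j | j) <;> simp [bipAdj]
    all_goals omega
end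

section
/- The complete bipartite graph K_{2,4} admits no rigid orientation, while the complete bipartite graph K_{2,3} admits a rigid orientation. -/
theorem aux_autom {m n : ℕ} (A : Sum (Fin m) (Fin n) → Sum (Fin m) (Fin n) → Prop)
    (h : IsOrientation (bipAdj m n) A) (σ : Equiv.Perm (Fin m)) (τ : Equiv.Perm (Fin n))
    (hP : ∀ i j, A (.inl i) (.inr j) ↔ A (.inl (σ i)) (.inr (τ j))) :
    IsAutom A (Equiv.sumCongr σ τ) := by
  obtain ⟨h1, h2⟩ := h
  have hll : ∀ i i', ¬ A (.inl i) (.inl i') := fun i i' hA => by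
    have := (h2 _ _).1 (Or.inl hA); simp [bipAdj] at this
  have hrr : ∀ i i', ¬ A (.inr i) (.inr i') := fun i i' hA => by
    have := (h2 _ _).1 (Or.inl hA); simp [bipAdj] at this
  have hrl : ∀ i j, A (.inr j) (.inl i) ↔ ¬ A (.inl i) (.inr j) := fun i j => by
    have a := (h2 (.inl i) (.inr j)).2 (by simp [bipAdj])
    have b := h1 (.inl i) (.inr j)
    tauto
  rintro (i | i) (j | j)
  · simp [hll]
  · simpa using hP i j
  · simpa [hrl] using not_congr (hP j i)
  · simp [hrr]

def exB : Sum (Fin 2) (Fin 3) → Sum (Fin 2) (Fin 3) → Bool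
  | .inl i, .inr j => decide (i.val + j.val < 2)
  | .inr j, .inl i => decide (2 ≤ i.val + j.val)
  | _, _ => false

/-- `K_{2,4}` admits no rigid orientation, while `K_{2,3}` admits a rigid
orientation. -/
theorem K24_no_rigid_K23_rigid :
    (∀ A : Sum (Fin 2) (Fin 4) → Sum (Fin 2) (Fin 4) → Prop,
      IsOrientation (bipAdj 2 4) A → ¬ IsRigid A) ∧
    (∃ A : Sum (Fin 2) (Fin 3) → Sum (Fin 2) (Fin 3) → Prop,
      IsOrientation (bipAdj 2 3) A ∧ IsRigid A) := by
  constructor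
  · intro A h hr
    classical
    let f : Fin 4 → Bool × Bool := fun j =>
      (decide (A (.inl 0) (.inr j)), decide (A (.inl 1) (.inr j)))
    by_cases hf : Function.Injective f
    · have hb : Function.Bijective f :=
        (Fintype.bijective_iff_injective_and_card f).2 ⟨hf, by simp⟩
      let e := Equiv.ofBijective f hb
      let τ : Equiv.Perm (Fin 4) := (e.trans (Equiv.prodComm _ _)).trans e.symm
      have hτ : ∀ j, f (τ j) = (f j).swap := fun j => by
        have : e (τ j) = (e j).swap := by simp [τ]
        exact this
      have key := hr _ (aux_autom A h (Equiv.swap 0 1) τ (by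
        intro i j
        have := hτ j
        simp only [f, Prod.swap, Prod.mk.injEq, decide_eq_decide] at this
        fin_cases i
        · simpa using this.2.symm
        · simpa using this.1.symm))
      have := congrArg (fun p => p (Sum.inl 0)) key
      simp at this
    · simp only [Function.Injective, not_forall] at hf
      obtain ⟨a, b, hab, hne⟩ := hf
      simp only [f, Prod.mk.injEq, decide_eq_decide] at hab
      have hab' : ∀ i, A (.inl i) (.inr a) ↔ A (.inl i) (.inr b) := by
        intro i
        fin_cases i
        · exact hab.1
        · exact hab.2
      have key := hr _ (aux_autom A h 1 (Equiv.swap a b) (by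
        intro i j
        rw [Equiv.swap_apply_def]
        split_ifs with h1 h2
        · subst h1; exact hab' i
        · subst h2; exact (hab' i).symm
        · rfl))
      have := congrArg (fun p => p (Sum.inr a)) key
      simp at this
      exact hne this.symm
  · refine ⟨fun u v => exB u v = true, ⟨by decide, ?_⟩, ?_⟩
    · unfold bipAdj; decide
    · intro φ h
      have hd : ∀ u, (Finset.univ.filter fun v => exB u v = true).card
          = (Finset.univ.filter fun v => exB (φ u) v = true).card := by
        intro u
        refine Finset.card_bij (fun v _ => φ v) ?_ ?_ ?_
        · intro v hv; simpa using (h u v).1 (by simpa using hv)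
        · intro a _ b _ hh; exact φ.injective hh
        · intro b hb
          refine ⟨φ.symm b, ?_, by simp⟩
          simpa using (h u (φ.symm b)).2 (by simpa using hb)
      have hi : ∀ u, (Finset.univ.filter fun v => exB v u = true).card
          = (Finset.univ.filter fun v => exB v (φ u) = true).card := by
        intro u
        refine Finset.card_bij (fun v _ => φ v) ?_ ?_ ?_
        · intro v hv; simpa using (h v u).1 (by simpa using hv)
        · intro a _ b _ hh; exact φ.injective hh
        · intro b hb
          refine ⟨φ.symm b, ?_, by simp⟩
          simpa using (h (φ.symm b) u).2 (by simpa using hb)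
      have hu : ∀ u w, (Finset.univ.filter fun v => exB u v = true).card
          = (Finset.univ.filter fun v => exB w v = true).card →
          (Finset.univ.filter fun v => exB v u = true).card
          = (Finset.univ.filter fun v => exB v w = true).card → w = u := by decide
      ext1 u
      exact hu u (φ u) (hd u) (hi u)
end

section
/- Let m, n be integers with 3 ≤ m < n ≤ 2^m and let A be an orientation of the complete bipartite graph K_{m,n} having no pair of distinct full twin vertices in Y. Then every automorphism of A that fixes every vertex of X is the identity. Consequently, if the in-degrees of the vertices of X in A are pairwise distinct, then A is rigid. -/
/-- Let `3 ≤ m < n ≤ 2^m` and let `A` be an orientation of `K_{m,n}` having no pair of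
distinct full twin vertices in `Y`. Then every automorphism of `A` fixing every vertex
of `X` is the identity; consequently, if the in-degrees of the vertices of `X` are
pairwise distinct, then `A` is rigid. -/
theorem no_full_twins_act_on_X (m n : ℕ) (hm : 3 ≤ m) (hmn : m < n) (hn : n ≤ 2 ^ m)
    (A : Sum (Fin m) (Fin n) → Sum (Fin m) (Fin n) → Prop)
    (hA : IsOrientation (bipAdj m n) A)
    (htwins : ∀ j j' : Fin n, j ≠ j' → ¬ (∀ w, A (Sum.inr j) w ↔ A (Sum.inr j') w)) :
    (∀ φ : Equiv.Perm (Sum (Fin m) (Fin n)), IsAutom A φ →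
      (∀ i : Fin m, φ (Sum.inl i) = Sum.inl i) → φ = 1) ∧
    ((∀ i i' : Fin m,
        ({w | A w (Sum.inl i)} : Set (Sum (Fin m) (Fin n))).ncard =
          ({w | A w (Sum.inl i')} : Set (Sum (Fin m) (Fin n))).ncard → i = i') →
      IsRigid A) := by
  have hadj : ∀ φ : Equiv.Perm (Sum (Fin m) (Fin n)), IsAutom A φ → ∀ u v,
      u.isLeft ≠ v.isLeft → (φ u).isLeft ≠ (φ v).isLeft := by
    intro φ hφ u v h
    have h1 := (hA.2 u v).2 h
    rw [hφ u v, hφ v u] at h1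
    exact (hA.2 _ _).1 h1
  have hYY : ∀ j k : Fin n, ¬ A (Sum.inr j) (Sum.inr k) := by
    intro j k h
    exact (hA.2 _ _).1 (Or.inl h) rfl
  have part1 : ∀ φ : Equiv.Perm (Sum (Fin m) (Fin n)), IsAutom A φ →
      (∀ i : Fin m, φ (Sum.inl i) = Sum.inl i) → φ = 1 := by
    intro φ hφ hfix
    ext1 u
    rcases u with i | j
    · simpa using hfix i
    · rcases hj : φ (Sum.inr j) with i | j'
      · rw [← hfix i] at hj
        exact absurd (φ.injective hj) (by simp)
      · by_cases hjj : j = j'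
        · simp [hjj]
        · exfalso
          apply htwins j j' hjj
          intro w
          rcases w with i | k
          · rw [hφ, hj, hfix]
          · exact iff_of_false (hYY _ _) (hYY _ _)
  refine ⟨part1, ?_⟩
  intro hdeg φ hφ
  apply part1 φ hφ
  intro i
  rcases hi : φ (Sum.inl i) with i' | j
  · have himg : ({w | A w (Sum.inl i')} : Set (Sum (Fin m) (Fin n))) =
        φ '' {w | A w (Sum.inl i)} := by
      ext w
      constructor
      · intro hw
        refine ⟨φ.symm w, ?_, by simp⟩
        show A _ _
        rw [hφ, hi]
        simpa using hw
      · rintro ⟨v, hv, rfl⟩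
        have hv' : A v (Sum.inl i) := hv
        rw [hφ, hi] at hv'
        exact hv'
    have := hdeg i i' (by rw [himg, Set.ncard_image_of_injective _ φ.injective])
    rw [this]
  · exfalso
    have hY : ∀ k : Fin n, ∃ x : Fin m, φ (Sum.inr k) = Sum.inl x := by
      intro k
      have h := hadj φ hφ (Sum.inl i) (Sum.inr k) (by simp)
      rw [hi] at h
      rcases hk : φ (Sum.inr k) with x | y
      · exact ⟨x, rfl⟩
      · rw [hk] at h
        simp at h
    choose f hf using hY
    have hinj : Function.Injective f := by
      intro a b hab
      have : φ (Sum.inr a) = φ (Sum.inr b) := by rw [hf, hf, hab]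
      exact Sum.inr_injective (φ.injective this)
    have := Fintype.card_le_of_injective f hinj
    simp at this
    omega
end

section
/- For every integer n with 4 ≤ n ≤ 6, the complete bipartite graph K_{3,n} admits a rigid orientation; and for every integer n with 5 ≤ n ≤ 13, the complete bipartite graph K_{4,n} admits a rigid orientation. -/
def orA {m n : ℕ} (f : Fin m → Fin n → Bool) : Sum (Fin m) (Fin n) → Sum (Fin m) (Fin n) → Prop
  | .inl x, .inr y => f x y = true
  | .inr y, .inl x => f x y = false
  | _, _ => False

theorem orA_orient {m n : ℕ} (f : Fin m → Fin n → Bool) : IsOrientation (bipAdj m n) (orA f) := by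
  constructor
  · rintro (u | u) (v | v) <;> simp [orA]
  · rintro (u | u) (v | v) 
    · simp [orA, bipAdj]
    · cases h : f u v <;> simp [orA, bipAdj, h]
    · cases h : f v u <;> simp [orA, bipAdj, h]
    · simp [orA, bipAdj]

theorem orA_rigid {m n : ℕ} (hm : 0 < m) (hmn : m < n) (f : Fin m → Fin n → Bool)
    (hcol : ∀ y y', (∀ x, f x y = f x y') → y = y')
    (hrow : ∀ x x', (∑ y, if f x y then 1 else 0) = (∑ y, if f x' y then 1 else 0) → x = x') :
    IsRigid (orA f) := by
  intro φ hφ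
  have key : ∀ u v, u.isLeft ≠ v.isLeft ↔ (φ u).isLeft ≠ (φ v).isLeft := by
    intro u v
    have h1 := (orA_orient f).2 u v
    have h2 := (orA_orient f).2 (φ u) (φ v)
    rw [← hφ u v, ← hφ v u] at h2
    exact h1.symm.trans h2
  have hL : (φ (.inl ⟨0, hm⟩)).isLeft = true := by
    by_contra h0
    have hr : ∀ y : Fin n, (φ (.inr y)).isLeft = true := by
      intro y
      have := (key (.inl ⟨0, hm⟩) (.inr y)).1 (by simp)
      revert this h0
      cases (φ (.inl ⟨0, hm⟩)).isLeft <;> cases (φ (.inr y)).isLeft <;> simp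
    choose g hg using fun y => Sum.isLeft_iff.1 (hr y)
    have hinj : Function.Injective g := by
      intro a b hab
      have : φ (.inr a) = φ (.inr b) := by rw [hg, hg, hab]
      simpa using this
    have := Fintype.card_le_of_injective g hinj
    simp at this
    omega
  have hR : ∀ y : Fin n, (φ (.inr y)).isRight = true := by
    intro y
    have := (key (.inl ⟨0, hm⟩) (.inr y)).1 (by simp)
    rw [hL] at this
    revert this
    generalize φ (.inr y) = b
    rcases b with b | b <;> simp
  have hLL : ∀ x : Fin m, (φ (.inl x)).isLeft = true := by
    intro x
    have := (key (.inl x) (.inr ⟨0, by omega⟩)).1 (by simp)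
    have h2 := hR ⟨0, by omega⟩
    revert this h2
    generalize φ (.inl x) = a
    generalize φ (.inr _) = b
    rcases a with a | a <;> rcases b with b | b <;> simp
  choose g hg using fun y => Sum.isRight_iff.1 (hR y)
  choose k hk using fun x => Sum.isLeft_iff.1 (hLL x)
  have hinj : Function.Injective g := by
    intro a b hab
    have : φ (.inr a) = φ (.inr b) := by rw [hg, hg, hab]
    simpa using this
  have hbij : Function.Bijective g := Finite.injective_iff_bijective.1 hinj
  have hf : ∀ x y, f x y = f (k x) (g y) := by
    intro x y
    have := hφ (.inl x) (.inr y)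
    rw [hg, hk] at this
    simp only [orA] at this
    exact Bool.eq_iff_iff.2 this
  have hkx : ∀ x, k x = x := by
    intro x
    apply hrow
    rw [← hbij.sum_comp]
    simp only [← hf]
  have hgy : ∀ y, g y = y := by
    intro y
    apply hcol
    intro x
    rw [hf x y, hkx]
  ext1 u
  rcases u with x | y
  · simp [hk, hkx]
  · simp [hg, hgy]

theorem exists_rigid {m n : ℕ} (L : Fin n → ℕ) (hm : 0 < m) (hmn : m < n)
    (hcol : ∀ y y', (∀ x : Fin m, (L y).testBit x = (L y').testBit x) → y = y')
    (hrow : ∀ x x' : Fin m, (∑ y, if (L y).testBit x then 1 else 0) =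
      (∑ y, if (L y).testBit x' then 1 else 0) → x = x') :
    ∃ A : Sum (Fin m) (Fin n) → Sum (Fin m) (Fin n) → Prop,
        IsOrientation (bipAdj m n) A ∧ IsRigid A :=
  ⟨orA fun x y => (L y).testBit x, orA_orient _, orA_rigid hm hmn _ hcol hrow⟩

set_option maxRecDepth 100000 in
/-- For every `4 ≤ n ≤ 6`, `K_{3,n}` admits a rigid orientation; and for every
`5 ≤ n ≤ 13`, `K_{4,n}` admits a rigid orientation. -/
theorem K3n_K4n_rigid_orientations :
    (∀ n : ℕ, 4 ≤ n → n ≤ 6 →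
      ∃ A : Sum (Fin 3) (Fin n) → Sum (Fin 3) (Fin n) → Prop,
        IsOrientation (bipAdj 3 n) A ∧ IsRigid A) ∧
    (∀ n : ℕ, 5 ≤ n → n ≤ 13 →
      ∃ A : Sum (Fin 4) (Fin n) → Sum (Fin 4) (Fin n) → Prop,
        IsOrientation (bipAdj 4 n) A ∧ IsRigid A) := by
  constructor
  · intro n h1 h2
    interval_cases n
    · exact exists_rigid ![0, 1, 3, 7] (by decide) (by decide) (by decide) (by decide)
    · exact exists_rigid ![0, 1, 2, 3, 5] (by decide) (by decide) (by decide) (by decide)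
    · exact exists_rigid ![0, 1, 2, 3, 5, 7] (by decide) (by decide) (by decide) (by decide)
  · intro n h1 h2
    interval_cases n
    · exact exists_rigid ![0, 1, 2, 3, 5] (by decide) (by decide) (by decide) (by decide)
    · exact exists_rigid ![0, 1, 2, 3, 5, 7] (by decide) (by decide) (by decide) (by decide)
    · exact exists_rigid ![0, 1, 2, 3, 4, 5, 11] (by decide) (by decide) (by decide) (by decide)
    · exact exists_rigid ![0, 1, 2, 3, 4, 5, 7, 11] (by decide) (by decide) (by decide) (by decide)
    · exact exists_rigid ![0, 1, 2, 3, 4, 5, 6, 9, 11] (by decide) (by decide) (by decide) (by decide)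
    · exact exists_rigid ![0, 1, 2, 3, 4, 5, 6, 7, 9, 11] (by decide) (by decide) (by decide) (by decide)
    · exact exists_rigid ![0, 1, 2, 3, 4, 5, 6, 7, 8, 9, 11] (by decide) (by decide) (by decide) (by decide)
    · exact exists_rigid ![0, 1, 2, 3, 4, 5, 6, 7, 8, 9, 11, 15] (by decide) (by decide) (by decide) (by decide)
    · exact exists_rigid ![0, 1, 2, 3, 4, 5, 6, 7, 9, 10, 11, 13, 15] (by decide) (by decide) (by decide) (by decide)
end

section
/- For all integers m and k with m ≥ 5 and ⌈m/2⌉ ≤ k < 2^m − m, the complete bipartite graph K_{m, 2^m − k} admits a rigid orientation. -/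
/-- A family of sets with no nontrivial symmetry. -/
def RigFam {m : ℕ} (F : Finset (Finset (Fin m))) : Prop :=
  ∀ σ : Equiv.Perm (Fin m), (∀ A, A ∈ F ↔ A.map σ.toEmbedding ∈ F) → σ = 1

lemma rigFam_compl {m : ℕ} {F : Finset (Finset (Fin m))} (h : RigFam F) : RigFam Fᶜ := by
  intro σ hσ
  apply h σ
  intro A
  have := hσ A
  simp only [Finset.mem_compl] at this
  tauto

lemma rig_fwd {m : ℕ} {F : Finset (Finset (Fin m))} (σ : Equiv.Perm (Fin m))
    (h : ∀ A ∈ F, A.map σ.toEmbedding ∈ F) : ∀ A, A ∈ F ↔ A.map σ.toEmbedding ∈ F := by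
  intro A
  refine ⟨h A, fun hA => ?_⟩
  have hinj : Function.Injective (fun B : Finset (Fin m) => B.map σ.toEmbedding) :=
    Finset.map_injective _
  have heq : F.image (fun B : Finset (Fin m) => B.map σ.toEmbedding) = F := by
    apply Finset.eq_of_subset_of_card_le
    · intro B hB
      obtain ⟨C, hC, rfl⟩ := Finset.mem_image.1 hB
      exact h C hC
    · rw [Finset.card_image_of_injective _ hinj]
  rw [← heq] at hA
  obtain ⟨C, hC, hCA⟩ := Finset.mem_image.1 hA
  exact hinj hCA ▸ hC

/-- Extension by sets of other sizes. -/
lemma rig_extend {m : ℕ} (S : ℕ → Prop) [DecidablePred S] (F₀ : Finset (Finset (Fin m)))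
    (hS : ∀ A ∈ F₀, S A.card) (hr : RigFam F₀) (k : ℕ) (h1 : F₀.card ≤ k)
    (h2 : k ≤ F₀.card + (Finset.univ.filter (fun A : Finset (Fin m) => ¬ S A.card)).card) :
    ∃ F : Finset (Finset (Fin m)), F.card = k ∧ RigFam F := by
  obtain ⟨E, hE, hEc⟩ := Finset.exists_subset_card_eq
    (s := Finset.univ.filter (fun A : Finset (Fin m) => ¬ S A.card)) (n := k - F₀.card) (by omega)
  have hE' : ∀ A ∈ E, ¬ S A.card := fun A hA => (Finset.mem_filter.1 (hE hA)).2
  refine ⟨F₀ ∪ E, ?_, ?_⟩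
  · rw [Finset.card_union_of_disjoint, hEc]
    · omega
    · rw [Finset.disjoint_left]
      exact fun A hA hA' => hE' A hA' (hS A hA)
  · intro σ hσ
    apply hr σ
    apply rig_fwd
    intro A hA
    have h3 := (hσ A).1 (Finset.mem_union_left _ hA)
    rcases Finset.mem_union.1 h3 with h | h
    · exact h
    · exact absurd (by simpa using hS A hA) (hE' _ h)

lemma map_mem {m : ℕ} (σ : Equiv.Perm (Fin m)) (A : Finset (Fin m)) (x : Fin m) :
    σ x ∈ A.map σ.toEmbedding ↔ x ∈ A := by
  simp

/-- The path family. -/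
def pf (m : ℕ) (i : ℕ) : Finset (Fin m) :=
  Finset.univ.filter (fun x => x.val = i ∨ x.val + 1 = i)

lemma mem_pf {m i : ℕ} (x : Fin m) : x ∈ pf m i ↔ (x.val = i ∨ x.val + 1 = i) := by
  simp [pf]

/-- The base path family. -/
def PF (m : ℕ) : Finset (Finset (Fin m)) := (Finset.range (m - 1)).image (pf m)

lemma PF_card (m : ℕ) : (PF m).card = m - 1 := by
  rw [PF, Finset.card_image_of_injOn, Finset.card_range]
  intro i hi j hj hij
  simp only [Finset.coe_range, Set.mem_Iio] at hi hj
  have h1 := mem_pf (m := m) (i := i) ⟨i, by omega⟩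
  have h2 := mem_pf (m := m) (i := j) ⟨j, by omega⟩
  have h3 := mem_pf (m := m) (i := j) ⟨i, by omega⟩
  have h4 := mem_pf (m := m) (i := i) ⟨j, by omega⟩
  simp only at hij h1 h2 h3 h4
  rw [hij] at h1 h4
  simp only [true_or, iff_true] at h1 h2
  have := h3.1 h1
  have := h4.1 h2
  omega

lemma PF_size (m : ℕ) : ∀ A ∈ PF m, (A.card = 1 ∨ A.card = 2) := by
  intro A hA
  obtain ⟨i, hi, rfl⟩ := Finset.mem_image.1 hA
  rw [Finset.mem_range] at hi
  have h1 : 0 < (pf m i).card :=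
    Finset.card_pos.2 ⟨⟨i, by omega⟩, (mem_pf _).2 (Or.inl rfl)⟩
  have h2 : (pf m i).card ≤ 2 := by
    have : pf m i ⊆ {⟨i, by omega⟩, ⟨i - 1, by omega⟩} := by
      intro x hx
      rw [mem_pf] at hx
      simp only [Finset.mem_insert, Finset.mem_singleton, Fin.ext_iff]
      omega
    exact (Finset.card_le_card this).trans Finset.card_le_two
  omega

lemma PF_rig (m : ℕ) : RigFam (PF m) := by
  intro σ hσ
  have key : ∀ i : ℕ, ∀ hi : i < m, i < m - 1 → σ ⟨i, hi⟩ = ⟨i, hi⟩ := by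
    intro i
    induction i using Nat.strong_induction_on with
    | _ i ih =>
    intro hi hi'
    have h1 := (hσ (pf m i)).1 (Finset.mem_image_of_mem _ (Finset.mem_range.2 hi'))
    obtain ⟨j, hj, hji⟩ := Finset.mem_image.1 h1
    rw [Finset.mem_range] at hj
    have hmem : ∀ x : Fin m, (x.val = i ∨ x.val + 1 = i) ↔ ((σ x).val = j ∨ (σ x).val + 1 = j) := by
      intro x
      rw [← mem_pf, ← mem_pf, hji, map_mem]
    have hmem' : ∀ y : Fin m, ((σ.symm y).val = i ∨ (σ.symm y).val + 1 = i) ↔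
        (y.val = j ∨ y.val + 1 = j) := by
      intro y
      have := hmem (σ.symm y)
      simpa using this
    have hinj : ∀ t : ℕ, ∀ ht : t < i, (σ ⟨i, hi⟩).val ≠ t := by
      intro t ht h
      have h2 := ih t ht (by omega) (by omega)
      have h3 : σ ⟨i, hi⟩ = σ ⟨t, by omega⟩ := by
        rw [h2]; exact Fin.ext h
      have := σ.injective h3
      simp only [Fin.mk.injEq] at this
      omega
    apply Fin.ext
    have hii := (hmem ⟨i, hi⟩).1 (Or.inl rfl)
    rcases Nat.eq_zero_or_pos i with h0 | h0
    · subst h0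
      rcases Nat.eq_zero_or_pos j with hj0 | hj0
      · simp only; omega
      · have ha := (hmem' ⟨j, by omega⟩).2 (Or.inl rfl)
        have hb := (hmem' ⟨j - 1, by omega⟩).2 (Or.inr (by simp only; omega))
        have : σ.symm ⟨j, by omega⟩ = σ.symm ⟨j - 1, by omega⟩ := Fin.ext (by omega)
        have := σ.symm.injective this
        simp only [Fin.mk.injEq] at this
        omega
    · have h2 := ih (i - 1) (by omega) (by omega) (by omega)
      have h3 := (hmem ⟨i - 1, by omega⟩).1 (Or.inr (by simp only; omega))
      rw [h2] at h3
      simp only at h3 ⊢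
      by_contra hne
      exact hinj (σ ⟨i, hi⟩).val (by omega) rfl
  ext x
  simp only [Equiv.Perm.coe_one, id_eq]
  by_cases hx : x.val < m - 1
  · rw [key x.val x.isLt hx]
  · by_cases hy : (σ x).val < m - 1
    · have := key (σ x).val (σ x).isLt hy
      exact congrArg Fin.val (σ.injective this)
    · have := x.isLt
      have := (σ x).isLt
      omega

lemma choose_le (m : ℕ) (hm : 5 ≤ m) : m + m.choose 2 ≤ 2 ^ (m - 1) := by
  induction m, hm using Nat.le_induction with
  | base => decide
  | succ n hn ih =>
    have h1 : (n + 1).choose 2 = n + n.choose 2 := by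
      rw [Nat.choose_succ_succ' n 1, Nat.choose_one_right]
    have h2 : 2 ^ (n + 1 - 1) = 2 * 2 ^ (n - 1) := by
      rw [← pow_succ']; congr 1; omega
    have h3 : 1 ≤ n.choose 2 := Nat.choose_pos (by omega)
    omega

lemma step2 (m k : ℕ) (hm : 5 ≤ m) (h1 : m - 1 ≤ k) (h2 : k ≤ 2 ^ (m - 1)) :
    ∃ F : Finset (Finset (Fin m)), F.card = k ∧ RigFam F := by
  apply rig_extend (fun n => n = 1 ∨ n = 2) (PF m) (PF_size m) (PF_rig m) k
  · rw [PF_card]; exact h1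
  · have hT := Finset.card_filter_add_card_filter_not (s := (Finset.univ : Finset (Finset (Fin m))))
      (fun A => A.card = 1 ∨ A.card = 2)
    have hU : (Finset.univ : Finset (Finset (Fin m))).card = 2 ^ m := by simp
    have hS : (Finset.univ.filter (fun A : Finset (Fin m) => A.card = 1 ∨ A.card = 2)).card
        ≤ m + m.choose 2 := by
      rw [Finset.filter_or]
      refine (Finset.card_union_le _ _).trans ?_
      have e : ∀ j, (Finset.univ.filter (fun A : Finset (Fin m) => A.card = j)).card
          = m.choose j := by
        intro j
        have := Finset.card_powersetCard j (Finset.univ : Finset (Fin m))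
        rw [Finset.card_univ, Fintype.card_fin] at this
        rw [← this]
        congr 1
        ext A
        simp [Finset.mem_powersetCard]
      rw [e, e, Nat.choose_one_right]
    have := choose_le m hm
    have h3 : 2 ^ m = 2 * 2 ^ (m - 1) := by
      rw [← pow_succ']; congr 1; omega
    omega

/-- Second base family. -/
def gf (m k i : ℕ) : Finset (Fin m) :=
  Finset.univ.filter (fun x => (i ≤ x.val ∧ x.val < k) ∨
    x.val = (if i = 0 then 2 * k - 2 else k + i - 1))

lemma mem_gf {m k i : ℕ} (x : Fin m) : x ∈ gf m k i ↔ ((i ≤ x.val ∧ x.val < k) ∨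
    x.val = (if i = 0 then 2 * k - 2 else k + i - 1)) := by
  simp [gf]

lemma gf_card {m k i : ℕ} (hk : 3 ≤ k) (hm : 2 * k - 1 ≤ m) (hi : i < k) :
    (gf m k i).card = k + 1 - i := by
  rw [← Finset.card_map Fin.valEmbedding]
  have : (gf m k i).map Fin.valEmbedding
      = insert (if i = 0 then 2 * k - 2 else k + i - 1) (Finset.Ico i k) := by
    ext x
    simp only [Finset.mem_map, mem_gf, Fin.valEmbedding_apply, Finset.mem_insert, Finset.mem_Ico]
    constructor
    · rintro ⟨y, hy, rfl⟩
      tauto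
    · intro h
      refine ⟨⟨x, ?_⟩, ?_, rfl⟩
      · split_ifs at h <;> omega
      · tauto
  rw [this, Finset.card_insert_of_notMem, Nat.card_Ico]
  · omega
  · rw [Finset.mem_Ico]; split_ifs <;> omega

lemma gf_sep {m k : ℕ} (hk : 3 ≤ k) (hm' : m ≤ 2 * k) (x y : Fin m)
    (h : ∀ i < k, x ∈ gf m k i ↔ y ∈ gf m k i) : x = y := by
  simp only [mem_gf] at h
  apply Fin.ext
  have hx := x.isLt
  have hy := y.isLt
  generalize x.val = a at *
  generalize y.val = b at *
  have main : ∀ a b : ℕ, a < m → b < m → (∀ i < k, ((i ≤ a ∧ a < k) ∨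
    a = (if i = 0 then 2 * k - 2 else k + i - 1)) ↔ ((i ≤ b ∧ b < k) ∨
    b = (if i = 0 then 2 * k - 2 else k + i - 1))) → a < b → False := by
    intro a b ha hb h hab
    by_cases hbk : b < k
    · have h1 := h b hbk
      rw [if_neg (by omega)] at h1
      omega
    · by_cases hak : a < k
      · have h0 := h 0 (by omega)
        have h1 := h 1 (by omega)
        have h2 := h (k - 1) (by omega)
        rw [if_pos rfl] at h0
        rw [if_neg (by omega)] at h1 h2
        omega
      · have h1 := h (a - k + 1) (by omega)
        rw [if_neg (by omega)] at h1
        omega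
  rcases lt_trichotomy a b with h' | h' | h'
  · exact (main a b hx hy h h').elim
  · exact h'
  · exact (main b a hy hx (fun i hi => (h i hi).symm) h').elim

lemma step1 (m k : ℕ) (hm : 5 ≤ m) (h1 : (m + 1) / 2 ≤ k) (h2 : k ≤ m) :
    ∃ F : Finset (Finset (Fin m)), F.card = k ∧ RigFam F := by
  obtain ⟨l, hl⟩ : ∃ l, l = (m + 1) / 2 := ⟨_, rfl⟩
  have hl3 : 3 ≤ l := by omega
  have hc : ((Finset.range l).image (gf m l)).card = l := by
    rw [Finset.card_image_of_injOn, Finset.card_range]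
    intro i hi j hj hij
    simp only [Finset.coe_range, Set.mem_Iio] at hi hj
    have := congrArg Finset.card hij
    rw [gf_card hl3 (by omega) hi, gf_card hl3 (by omega) hj] at this
    omega
  apply rig_extend (fun n => 2 ≤ n) ((Finset.range l).image (gf m l))
  · intro A hA
    obtain ⟨i, hi, rfl⟩ := Finset.mem_image.1 hA
    rw [Finset.mem_range] at hi
    rw [gf_card hl3 (by omega) hi]
    omega
  · intro σ hσ
    have key : ∀ i < l, (gf m l i).map σ.toEmbedding = gf m l i := by
      intro i hi
      have h3 := (hσ (gf m l i)).1 (Finset.mem_image_of_mem _ (Finset.mem_range.2 hi))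
      obtain ⟨j, hj, hji⟩ := Finset.mem_image.1 h3
      rw [Finset.mem_range] at hj
      have h4 := congrArg Finset.card hji
      rw [Finset.card_map, gf_card hl3 (by omega) hi, gf_card hl3 (by omega) hj] at h4
      have : j = i := by omega
      subst this
      exact hji.symm
    apply Equiv.ext
    intro x
    apply gf_sep hl3 (by omega)
    intro i hi
    simp only [Equiv.Perm.coe_one, id_eq]
    rw [← map_mem σ _ x, key i hi]
  · omega
  · rw [hc]
    have : m ≤ (Finset.univ.filter (fun A : Finset (Fin m) => ¬ 2 ≤ A.card)).card := by
      have h3 : (Finset.univ.image (fun x : Fin m => ({x} : Finset (Fin m)))).card = m := by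
        rw [Finset.card_image_of_injective _ Finset.singleton_injective]
        simp
      rw [← h3]
      conv_rhs => rw [h3]
      apply Finset.card_le_card
      intro A hA
      obtain ⟨x, -, rfl⟩ := Finset.mem_image.1 hA
      simp
    omega

lemma exists_rig (m k : ℕ) (hm : 5 ≤ m) (h1 : (m + 1) / 2 ≤ k) (h2 : k ≤ 2 ^ (m - 1)) :
    ∃ F : Finset (Finset (Fin m)), F.card = k ∧ RigFam F := by
  rcases le_total k m with h | h
  · exact step1 m k hm h1 h
  · exact step2 m k hm (by omega) h2

/-- The orientation coming from a family of sets. -/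
def famOri {m n : ℕ} (e : Fin n → Finset (Fin m)) :
    Sum (Fin m) (Fin n) → Sum (Fin m) (Fin n) → Prop
  | Sum.inl x, Sum.inr y => x ∈ e y
  | Sum.inr y, Sum.inl x => x ∉ e y
  | _, _ => False

lemma famOri_ori {m n : ℕ} (e : Fin n → Finset (Fin m)) :
    IsOrientation (bipAdj m n) (famOri e) := by
  constructor
  · rintro (x | x) (y | y) <;> simp [famOri]
  · rintro (x | x) (y | y) <;> simp [famOri, bipAdj] <;> tauto

lemma famOri_rigid {m n : ℕ} (hmn : m < n) (F : Finset (Finset (Fin m))) (hF : RigFam F)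
    (e : Fin n → Finset (Fin m)) (he : Function.Injective e) (heF : ∀ A, A ∈ F ↔ ∃ y, e y = A) :
    IsRigid (famOri e) := by
  intro φ hφ
  have hadj : ∀ u v, bipAdj m n u v ↔ bipAdj m n (φ u) (φ v) := by
    intro u v
    rw [← (famOri_ori e).2, ← (famOri_ori e).2, hφ u v, hφ v u]
  have hL : ∀ x, ∃ x', φ (Sum.inl x) = Sum.inl x' := by
    intro x
    rcases hx : φ (Sum.inl x) with x' | y'
    · exact ⟨x', rfl⟩
    · exfalso
      have h1 : ∀ y, ∃ z, φ (Sum.inr y) = Sum.inl z := by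
        intro y
        have h2 := (hadj (Sum.inl x) (Sum.inr y)).1 (by simp [bipAdj])
        rw [hx] at h2
        rcases hy : φ (Sum.inr y) with z | z
        · exact ⟨z, rfl⟩
        · rw [hy] at h2
          simp [bipAdj] at h2
      choose f hf using h1
      have hinj : Function.Injective f := by
        intro a b hab
        have : φ (Sum.inr a) = φ (Sum.inr b) := by rw [hf, hf, hab]
        exact Sum.inr_injective (φ.injective this)
      have := Fintype.card_le_of_injective f hinj
      simp at this
      omega
  choose s hs using hL
  have hsinj : Function.Injective s := by
    intro a b hab
    have : φ (Sum.inl a) = φ (Sum.inl b) := by rw [hs, hs, hab]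
    exact Sum.inl_injective (φ.injective this)
  have hR : ∀ y, ∃ y', φ (Sum.inr y) = Sum.inr y' := by
    intro y
    rcases hy : φ (Sum.inr y) with x' | y'
    · exfalso
      obtain ⟨x, hx⟩ := (Finite.injective_iff_surjective.1 hsinj) x'
      have : φ (Sum.inr y) = φ (Sum.inl x) := by rw [hy, hs, hx]
      have := φ.injective this
      simp at this
    · exact ⟨y', rfl⟩
  choose t ht using hR
  have hmem : ∀ x y, x ∈ e y ↔ s x ∈ e (t y) := by
    intro x y
    have := hφ (Sum.inl x) (Sum.inr y)
    rw [hs, ht] at this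
    exact this
  let σ : Equiv.Perm (Fin m) :=
    Equiv.ofBijective s (Finite.injective_iff_bijective.1 hsinj)
  have hσs : ∀ x, σ x = s x := fun x => rfl
  have hmap : ∀ y, (e y).map σ.toEmbedding = e (t y) := by
    intro y
    ext z
    obtain ⟨x, rfl⟩ := σ.surjective z
    rw [map_mem, hmem, hσs]
  have hσ : σ = 1 := by
    apply hF σ
    apply rig_fwd
    intro A hA
    obtain ⟨y, rfl⟩ := (heF A).1 hA
    exact (heF _).2 ⟨t y, (hmap y).symm⟩
  have hsid : ∀ x, s x = x := by
    intro x
    rw [← hσs, hσ]; rfl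
  apply Equiv.ext
  rintro (x | y)
  · rw [hs, hsid]; rfl
  · rw [ht]
    have : t y = y := by
      apply he
      ext x
      rw [hmem x y, hsid]
    rw [this]; rfl

/-- For all integers `m ≥ 5` and `⌈m/2⌉ ≤ k < 2^m - m`, the complete bipartite graph
`K_{m, 2^m - k}` admits a rigid orientation. (Note `⌈m/2⌉ = (m + 1) / 2` in natural
number arithmetic.) -/
theorem Km_2pow_sub_k_rigid (m k : ℕ) (hm : 5 ≤ m)
    (hk₁ : (m + 1) / 2 ≤ k) (hk₂ : k < 2 ^ m - m) :
    ∃ A : Sum (Fin m) (Fin (2 ^ m - k)) → Sum (Fin m) (Fin (2 ^ m - k)) → Prop,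
      IsOrientation (bipAdj m (2 ^ m - k)) A ∧ IsRigid A := by
  have h3 : 2 ^ m = 2 * 2 ^ (m - 1) := by
    rw [← pow_succ']; congr 1; omega
  have hex : ∃ F : Finset (Finset (Fin m)), F.card = 2 ^ m - k ∧ RigFam F := by
    rcases le_total k (2 ^ (m - 1)) with h | h
    · obtain ⟨F, hF, hr⟩ := exists_rig m k hm hk₁ h
      refine ⟨Fᶜ, ?_, rigFam_compl hr⟩
      rw [Finset.card_compl, hF]
      simp
    · exact exists_rig m (2 ^ m - k) hm (by omega) (by omega)
  obtain ⟨F, hF, hr⟩ := hex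
  let e := (Finset.equivFinOfCardEq hF).symm
  refine ⟨famOri (fun y => (e y : Finset (Fin m))), famOri_ori _, ?_⟩
  apply famOri_rigid (by omega) F hr
  · exact Subtype.val_injective.comp e.injective
  · intro A
    constructor
    · intro hA
      exact ⟨e.symm ⟨A, hA⟩, by simp⟩
    · rintro ⟨y, rfl⟩
      exact (e y).2
end

section
/- Let m, n be integers with 3 ≤ m < n ≤ 2^m and let A be an orientation of the complete bipartite graph K_{m,n} having no pair of distinct full twin vertices in Y (so the arc-patterns p(y) : X → {0,1} of the vertices y in Y, where p(y)(x_j) = 0 if A x_j y and p(y)(x_j) = 1 if A y x_j, are pairwise distinct). If there exist two distinct vertices x_i, x_{i'} of X such that every pattern w : X → {0,1} that is NOT realized as p(y) for some y in Y satisfies w(x_i) = w(x_{i'}), then A is not rigid. Consequently, for every integer m ≥ 3 and every integer k with 0 ≤ k and 2^k < m, the complete bipartite graph K_{m, 2^m − k} admits no rigid orientation. -/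
/-- The arc-pattern (as a Boolean word on `X`) of a vertex `y ∈ Y` in an orientation `A`
of `K_{m,n}`: position `x` is `true` exactly when the edge is oriented from `y` to `x`.
A pattern `w : Fin m → Bool` is realized in `A` if it is the pattern of some `y ∈ Y`. -/
def IsRealizedPattern {m n : ℕ}
    (A : Sum (Fin m) (Fin n) → Sum (Fin m) (Fin n) → Prop) (w : Fin m → Bool) : Prop :=
  ∃ j : Fin n, ∀ x : Fin m, (w x = true ↔ A (Sum.inr j) (Sum.inl x))

theorem autom_aux {m n : ℕ} {A : Sum (Fin m) (Fin n) → Sum (Fin m) (Fin n) → Prop}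
    (hA : IsOrientation (bipAdj m n) A) (σ : Equiv.Perm (Fin m)) (f : Equiv.Perm (Fin n))
    (h : ∀ j x, A (Sum.inr j) (Sum.inl x) ↔ A (Sum.inr (f j)) (Sum.inl (σ x))) :
    IsAutom A (Equiv.sumCongr σ f) := by
  obtain ⟨h1, h2⟩ := hA
  have hxx : ∀ x x', ¬ A (Sum.inl x) (Sum.inl x') := by
    intro x x' hx
    have := (h2 _ _).1 (Or.inl hx)
    simp [bipAdj] at this
  have hyy : ∀ x x', ¬ A (Sum.inr x) (Sum.inr x') := by
    intro x x' hx
    have := (h2 _ _).1 (Or.inl hx)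
    simp [bipAdj] at this
  have hxy : ∀ x j, A (Sum.inl x) (Sum.inr j) ↔ ¬ A (Sum.inr j) (Sum.inl x) := by
    intro x j
    have h3 := (h2 (Sum.inl x) (Sum.inr j)).2 (by simp [bipAdj])
    have h4 := h1 (Sum.inl x) (Sum.inr j)
    tauto
  rintro (x | j) (x' | j')
  · simp [hxx]
  · simp only [Equiv.sumCongr_apply, Sum.map_inl, Sum.map_inr, hxy]
    rw [h]
  · simpa using h j x'
  · simp [hyy]

theorem key_aux {m n : ℕ} {A : Sum (Fin m) (Fin n) → Sum (Fin m) (Fin n) → Prop}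
    (hA : IsOrientation (bipAdj m n) A)
    (hinj : ∀ j j' : Fin n, (∀ x, A (Sum.inr j) (Sum.inl x) ↔ A (Sum.inr j') (Sum.inl x)) → j = j')
    (i i' : Fin m) (hi : i ≠ i')
    (hw : ∀ w : Fin m → Bool, ¬ IsRealizedPattern A w → w i = w i') : ¬ IsRigid A := by
  classical
  have hex : ∀ j : Fin n, ∃ j' : Fin n, ∀ x,
      (A (Sum.inr j) (Sum.inl (Equiv.swap i i' x)) ↔ A (Sum.inr j') (Sum.inl x)) := by
    intro j
    by_cases hr : IsRealizedPattern A
        (fun x => decide (A (Sum.inr j) (Sum.inl (Equiv.swap i i' x))))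
    · obtain ⟨j', hj'⟩ := hr
      exact ⟨j', fun x => by simpa using hj' x⟩
    · have := hw _ hr
      simp at this
      refine ⟨j, fun x => ?_⟩
      by_cases hx : x = i
      · subst hx; simp [this]
      by_cases hx' : x = i'
      · subst hx'; simp [this]
      rw [Equiv.swap_apply_of_ne_of_ne hx hx']
  choose f hf using hex
  have hff : Function.Involutive f := by
    intro j
    apply hinj
    intro x
    rw [← hf, ← hf, Equiv.swap_apply_self]
  intro hR
  have := hR _ (autom_aux hA (Equiv.swap i i') hff.toPerm (fun j x => by
    simp only [Function.Involutive.coe_toPerm]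
    rw [← hf, Equiv.swap_apply_self]))
  have h2 := congrArg (fun e => e (Sum.inl i)) this
  simp at h2
  exact hi h2.symm

theorem twin_aux {m n : ℕ} {A : Sum (Fin m) (Fin n) → Sum (Fin m) (Fin n) → Prop}
    (hA : IsOrientation (bipAdj m n) A) (hR : IsRigid A) (j j' : Fin n)
    (h : ∀ x, A (Sum.inr j) (Sum.inl x) ↔ A (Sum.inr j') (Sum.inl x)) : j = j' := by
  have := hR _ (autom_aux hA 1 (Equiv.swap j j') (fun l x => by
    by_cases hx : l = j
    · subst hx; simp [h]
    by_cases hx' : l = j'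
    · subst hx'; simp [h]
    rw [Equiv.swap_apply_of_ne_of_ne hx hx']; rfl))
  have h2 := congrArg (fun e => e (Sum.inr j)) this
  simp at h2
  exact h2.symm

theorem cols_aux {m k : ℕ} (hk : 2 ^ k < m)
    {A : Sum (Fin m) (Fin (2 ^ m - k)) → Sum (Fin m) (Fin (2 ^ m - k)) → Prop}
    (hinj : ∀ j j', (∀ x, A (Sum.inr j) (Sum.inl x) ↔ A (Sum.inr j') (Sum.inl x)) → j = j') :
    ∃ i i' : Fin m, i ≠ i' ∧ ∀ w : Fin m → Bool, ¬ IsRealizedPattern A w → w i = w i' := by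
  classical
  have hr : Fintype.card {w // IsRealizedPattern A w} ≥ 2 ^ m - k := by
    have := Fintype.card_le_of_injective
      (fun j : Fin (2 ^ m - k) => (⟨fun x => decide (A (Sum.inr j) (Sum.inl x)),
        j, fun x => by simp⟩ : {w // IsRealizedPattern A w})) (by
        intro j j' hjj
        apply hinj
        intro x
        have := congrFun (congrArg Subtype.val hjj) x
        simpa using this)
    simpa using this
  have hu : Fintype.card {w // ¬ IsRealizedPattern A w} ≤ k := by
    rw [Fintype.card_subtype_compl]
    simp only [Fintype.card_pi, Fintype.card_bool, Finset.prod_const, Finset.card_univ,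
      Fintype.card_fin]
    omega
  have hc : Fintype.card ({w // ¬ IsRealizedPattern A w} → Bool) < Fintype.card (Fin m) := by
    rw [Fintype.card_fun, Fintype.card_bool, Fintype.card_fin]
    exact (Nat.pow_le_pow_right (by norm_num) hu).trans_lt hk
  obtain ⟨i, i', hi, he⟩ := Fintype.exists_ne_map_eq_of_card_lt
    (fun (i : Fin m) (w : {w // ¬ IsRealizedPattern A w}) => w.1 i) hc
  exact ⟨i, i', hi, fun w hw => congrFun he ⟨w, hw⟩⟩

/-- (i) Let `3 ≤ m < n ≤ 2^m` and let `A` be an orientation of `K_{m,n}` with no pair of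
distinct full twins in `Y`. If there are two distinct vertices `x_i, x_{i'}` of `X` such
that every non-realized pattern `w` agrees on `x_i` and `x_{i'}`, then `A` is not rigid.
(ii) Consequently, for every `m ≥ 3` and every `k` with `2^k < m`, the complete
bipartite graph `K_{m, 2^m - k}` admits no rigid orientation. -/
theorem two_identical_columns_not_rigid :
    (∀ m n : ℕ, 3 ≤ m → m < n → n ≤ 2 ^ m →
      ∀ A : Sum (Fin m) (Fin n) → Sum (Fin m) (Fin n) → Prop,
        IsOrientation (bipAdj m n) A →
        (∀ j j' : Fin n, j ≠ j' → ¬ (∀ w, A (Sum.inr j) w ↔ A (Sum.inr j') w)) →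
        (∃ i i' : Fin m, i ≠ i' ∧
          ∀ w : Fin m → Bool, ¬ IsRealizedPattern A w → w i = w i') →
        ¬ IsRigid A) ∧
    (∀ m k : ℕ, 3 ≤ m → 2 ^ k < m →
      ∀ A : Sum (Fin m) (Fin (2 ^ m - k)) → Sum (Fin m) (Fin (2 ^ m - k)) → Prop,
        IsOrientation (bipAdj m (2 ^ m - k)) A → ¬ IsRigid A) := by
  constructor
  · rintro m n - - - A hA - ⟨i, i', hi, hw⟩ hR
    exact key_aux hA (twin_aux hA hR) i i' hi hw hR
  · intro m k _ hk A hA hR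
    obtain ⟨i, i', hi, hw⟩ := cols_aux hk (twin_aux hA hR)
    exact key_aux hA (twin_aux hA hR) i i' hi hw hR
end
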